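/- arXiv:2603.17750 — 2 statements merged into one kernel-verified Lean document; each statement's English description precedes it below -/
import Mathlib

section
/- Let p0 be a probability density on ℝ^m and q(·|y0) strictly positive probability densities on ℝ^d, differentiable in y, with mixture density p(y) = ∫ p0(y0) q(y|y0) dy0, and let the pair (Y0, Y) have joint density p0(y0) q(y|y0). Then for every measurable ψ : ℝ^d → ℝ^d with E‖ψ(Y)‖² < ∞ and under the integrability assumption E‖∇_y log q(Y|Y0)‖² < ∞, the decomposition E‖∇_y log q(Y|Y0) − ψ(Y)‖² = E‖∇ log p(Y) − ψ(Y)‖² + C holds, where C = E‖∇_y log q(Y|Y0)‖² − E‖∇ log p(Y)‖² does not depend on ψ. -/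
open MeasureTheory

/-- The mixture (marginal) density `p(y) = ∫ p0(y0) q(y|y0) dy0`. -/
noncomputable def mixtureDensity {m d : ℕ}
    (p0 : EuclideanSpace ℝ (Fin m) → ℝ)
    (q : EuclideanSpace ℝ (Fin d) → EuclideanSpace ℝ (Fin m) → ℝ)
    (y : EuclideanSpace ℝ (Fin d)) : ℝ :=
  ∫ y0, p0 y0 * q y y0

open Filter Topology

lemma aux_lin {α : Type*} [MeasurableSpace α] {μ : Measure α} {f g h : α → ℝ}
    (hf : Integrable f μ) (hg : Integrable g μ) (hh : Integrable h μ) :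
    ∫ x, (f x - 2 * g x + h x) ∂μ = ∫ x, f x ∂μ - 2 * ∫ x, g x ∂μ + ∫ x, h x ∂μ := by
  have h1 : Integrable (fun x => f x - 2 * g x) μ := hf.sub (hg.const_mul 2)
  rw [integral_add h1 hh, integral_sub hf (hg.const_mul 2), integral_const_mul]

lemma aux_core {α β E : Type*} [MeasurableSpace α] [MeasurableSpace β]
    [NormedAddCommGroup E] [InnerProductSpace ℝ E] [CompleteSpace E]
    [SecondCountableTopology E] [MeasurableSpace E] [BorelSpace E]
    (μ : Measure α) (ν : Measure β) [SFinite μ] [SFinite ν]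
    (w : α × β → ℝ) (S : α × β → E) (s ψ : β → E)
    (hw0 : ∀ z, 0 ≤ w z) (hw : Integrable w (μ.prod ν))
    (hWm : AEStronglyMeasurable (fun z => w z • S z) (μ.prod ν))
    (hsq : Integrable (fun z => w z * ‖S z‖ ^ 2) (μ.prod ν))
    (hs : Measurable s) (hψ : Measurable ψ)
    (hψsq : Integrable (fun z => w z * ‖ψ z.2‖ ^ 2) (μ.prod ν))
    (hswap : ∀ y, (∫ x, w (x, y) ∂μ) • s y = ∫ x, w (x, y) • S (x, y) ∂μ) :
    ∫ z, w z * ‖S z - ψ z.2‖ ^ 2 ∂(μ.prod ν)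
      = ∫ z, w z * ‖s z.2 - ψ z.2‖ ^ 2 ∂(μ.prod ν)
        + (∫ z, w z * ‖S z‖ ^ 2 ∂(μ.prod ν) - ∫ z, w z * ‖s z.2‖ ^ 2 ∂(μ.prod ν)) := by
  have hWS : Integrable (fun z => w z • S z) (μ.prod ν) := by
    refine (hw.add hsq).mono' hWm (ae_of_all _ fun z => ?_)
    simp only [Pi.add_apply, norm_smul, Real.norm_eq_abs, abs_of_nonneg (hw0 z)]
    nlinarith [hw0 z, mul_nonneg (hw0 z) (sq_nonneg (‖S z‖ - 1)),
      mul_nonneg (hw0 z) (norm_nonneg (S z)), mul_nonneg (hw0 z) (sq_nonneg (‖S z‖))]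
  have hsm : AEStronglyMeasurable (fun z : α × β => s z.2) (μ.prod ν) :=
    (hs.comp measurable_snd).aestronglyMeasurable
  have hψm : AEStronglyMeasurable (fun z : α × β => ψ z.2) (μ.prod ν) :=
    (hψ.comp measurable_snd).aestronglyMeasurable
  have hssq : Integrable (fun z : α × β => w z * ‖s z.2‖ ^ 2) (μ.prod ν) := by
    have hm : AEStronglyMeasurable (fun z : α × β => w z * ‖s z.2‖ ^ 2) (μ.prod ν) :=
      hw.1.mul (hsm.norm.pow 2)
    rw [integrable_prod_iff' hm]
    refine ⟨?_, ?_⟩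
    · filter_upwards [hw.prod_left_ae] with y hy
      exact hy.mul_const _
    · refine hsq.integral_prod_right.mono' hm.norm.prod_swap.integral_prod_right' ?_
      filter_upwards [hw.prod_left_ae, hWS.prod_left_ae, hsq.prod_left_ae] with y h1 h2 h3
      have e0 : ∀ x, ‖w (x, y) * ‖s y‖ ^ 2‖ = w (x, y) * ‖s y‖ ^ 2 := fun x => by
        rw [Real.norm_of_nonneg]; exact mul_nonneg (hw0 _) (sq_nonneg _)
      simp only [e0]
      rw [integral_mul_const, Real.norm_of_nonneg
        (mul_nonneg (integral_nonneg fun x => hw0 _) (sq_nonneg _))]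
      have e1 : ∫ x, inner ℝ (s y) (w (x, y) • S (x, y)) ∂μ
          = (∫ x, w (x, y) ∂μ) * ‖s y‖ ^ 2 := by
        rw [integral_inner h2, ← hswap y, inner_smul_right, real_inner_self_eq_norm_sq]
      have h2i : Integrable (fun x => inner ℝ (s y) (w (x, y) • S (x, y))) μ :=
        h2.const_inner _
      have e2 : 0 ≤ ∫ x, (w (x, y) * ‖S (x, y)‖ ^ 2
          - 2 * inner ℝ (s y) (w (x, y) • S (x, y)) + w (x, y) * ‖s y‖ ^ 2) ∂μ := by
        refine integral_nonneg fun x => ?_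
        have := mul_nonneg (hw0 (x, y)) (sq_nonneg ‖s y - S (x, y)‖)
        rw [norm_sub_sq_real] at this
        simp only [inner_smul_right, Pi.zero_apply]
        linarith
      rw [aux_lin h3 h2i (h1.mul_const _), integral_mul_const, e1] at e2
      linarith
  have bound : ∀ (c : ℝ) (a b : E), 0 ≤ c →
      ‖inner ℝ (c • a) b‖ ≤ c * ‖a‖ ^ 2 + c * ‖b‖ ^ 2 := by
    intro c a b hc
    refine (norm_inner_le_norm _ _).trans ?_
    rw [norm_smul, Real.norm_of_nonneg hc]
    nlinarith [mul_nonneg hc (sq_nonneg (‖a‖ - ‖b‖)), mul_nonneg hc (sq_nonneg ‖a‖),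
      mul_nonneg hc (sq_nonneg ‖b‖)]
  have i1 : Integrable (fun z : α × β => inner ℝ (w z • S z) (ψ z.2)) (μ.prod ν) :=
    (hsq.add hψsq).mono' (hWm.inner hψm) (ae_of_all _ fun z => bound _ _ _ (hw0 z))
  have i2 : Integrable (fun z : α × β => inner ℝ (w z • s z.2) (ψ z.2)) (μ.prod ν) :=
    (hssq.add hψsq).mono' ((hw.1.smul hsm).inner hψm)
      (ae_of_all _ fun z => bound _ _ _ (hw0 z))
  have key : ∫ z, inner ℝ (w z • S z) (ψ z.2) ∂(μ.prod ν)
      = ∫ z, inner ℝ (w z • s z.2) (ψ z.2) ∂(μ.prod ν) := by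
    rw [integral_prod_symm _ i1, integral_prod_symm _ i2]
    refine integral_congr_ae ?_
    filter_upwards [hw.prod_left_ae, hWS.prod_left_ae] with y h1 h2
    have a1 := integral_inner (𝕜 := ℝ) h2 (ψ y)
    have a2 := integral_inner (𝕜 := ℝ) (h1.smul_const (s y)) (ψ y)
    rw [integral_smul_const, hswap, ← a1] at a2
    calc _ = ∫ x, inner ℝ (ψ y) (w (x, y) • S (x, y)) ∂μ := by
            simp only [real_inner_comm]
      _ = _ := by
            rw [← a2]; simp only [real_inner_comm]
  have x1 : ∀ z, w z * ‖S z - ψ z.2‖ ^ 2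
      = w z * ‖S z‖ ^ 2 - 2 * inner ℝ (w z • S z) (ψ z.2) + w z * ‖ψ z.2‖ ^ 2 := fun z => by
    rw [norm_sub_sq_real, real_inner_smul_left]; ring
  have x2 : ∀ z : α × β, w z * ‖s z.2 - ψ z.2‖ ^ 2
      = w z * ‖s z.2‖ ^ 2 - 2 * inner ℝ (w z • s z.2) (ψ z.2) + w z * ‖ψ z.2‖ ^ 2 := fun z => by
    rw [norm_sub_sq_real, real_inner_smul_left]; ring
  simp only [x1, x2]
  rw [aux_lin hsq i1 hψsq, aux_lin hssq i2 hψsq, key]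
  ring

lemma aux_meas {α β : Type*} [MeasurableSpace α] [TopologicalSpace β]
    [TopologicalSpace.MetrizableSpace β] [SecondCountableTopology β]
    [MeasurableSpace β] [BorelSpace β] [Nonempty β]
    (μ : Measure α) (ν : Measure β) [SFinite μ] [SFinite ν]
    (w : α → β → ℝ) (hc : ∀ x, Continuous (w x))
    (hm : ∀ y, AEStronglyMeasurable (fun x => w x y) μ) :
    AEStronglyMeasurable (fun z : α × β => w z.1 z.2) (μ.prod ν) := by
  let D := TopologicalSpace.denseSeq β
  have hae : ∀ᵐ x ∂μ, ∀ n, w x (D n) = (hm (D n)).mk _ x :=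
    ae_all_iff.2 fun n => (hm (D n)).ae_eq_mk
  obtain ⟨t, ht, htm, hprop⟩ : ∃ t ∈ ae μ, MeasurableSet t ∧
      ∀ x ∈ t, ∀ n, w x (D n) = (hm (D n)).mk _ x := hae.exists_measurable_mem
  let v : α → β → ℝ := fun x y => t.indicator (fun x => w x y) x
  have hvc : ∀ x, Continuous (v x) := by
    intro x
    by_cases hx : x ∈ t
    · simpa [v, hx] using hc x
    · simpa [v, hx] using continuous_const
  have hvD : ∀ n, Measurable (fun x => v x (D n)) := by
    intro n
    have : (fun x => v x (D n)) = t.indicator ((hm (D n)).mk _) := by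
      funext x
      by_cases hx : x ∈ t
      · simp only [v, Set.indicator_of_mem hx, hprop x hx n]
      · simp [v, hx]
    rw [this]
    exact (hm (D n)).stronglyMeasurable_mk.measurable.indicator htm
  have hvm : ∀ y, Measurable (fun x => v x y) := by
    intro y
    have hy : y ∈ closure (Set.range D) := TopologicalSpace.denseRange_denseSeq β y
    obtain ⟨u, hu, hlim⟩ := mem_closure_iff_seq_limit.1 hy
    refine measurable_of_tendsto_metrizable (f := fun n x => v x (u n)) (fun n => ?_) ?_
    · obtain ⟨k, hk⟩ := hu n
      simp only [← hk]
      exact hvD k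
    · rw [tendsto_pi_nhds]
      intro x
      exact ((hvc x).tendsto y).comp hlim
  have hvu : StronglyMeasurable (Function.uncurry fun (y : β) (x : α) => v x y) :=
    stronglyMeasurable_uncurry_of_continuous_of_stronglyMeasurable hvc
      (fun y => (hvm y).stronglyMeasurable)
  have hv : StronglyMeasurable (fun z : α × β => v z.1 z.2) :=
    hvu.comp_measurable measurable_swap
  refine ⟨_, hv, ?_⟩
  have : ∀ᵐ z ∂(μ.prod ν), z.1 ∈ t := Measure.quasiMeasurePreserving_fst.ae ht
  filter_upwards [this] with z hz
  simp [v, hz]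

lemma aux_grad {m d : ℕ}
    (w : EuclideanSpace ℝ (Fin m) → EuclideanSpace ℝ (Fin d) → ℝ)
    (hd : ∀ x, Differentiable ℝ (w x))
    (hm : AEStronglyMeasurable
      (fun z : EuclideanSpace ℝ (Fin m) × EuclideanSpace ℝ (Fin d) => w z.1 z.2)) :
    AEStronglyMeasurable (fun z : EuclideanSpace ℝ (Fin m) × EuclideanSpace ℝ (Fin d) =>
      gradient (w z.1) z.2) := by
  let b := EuclideanSpace.basisFun (Fin d) ℝ
  have hco : ∀ i, AEStronglyMeasurable
      (fun z : EuclideanSpace ℝ (Fin m) × EuclideanSpace ℝ (Fin d) =>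
        inner ℝ (b i) (gradient (w z.1) z.2)) := by
    intro i
    have hsh : ∀ h : EuclideanSpace ℝ (Fin d), AEStronglyMeasurable
        (fun z : EuclideanSpace ℝ (Fin m) × EuclideanSpace ℝ (Fin d) => w z.1 (z.2 + h)) := by
      intro h
      have hmp : MeasurePreserving
          (fun z : EuclideanSpace ℝ (Fin m) × EuclideanSpace ℝ (Fin d) => (z.1, z.2 + h)) :=
        (MeasurePreserving.id volume).prod (measurePreserving_add_right volume h)
      simpa [Function.comp_def] using hm.comp_measurePreserving hmp
    refine aestronglyMeasurable_of_tendsto_ae (u := atTop)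
      (f := fun (n : ℕ) z => ((n : ℝ) + 1) • (w z.1 (z.2 + ((n : ℝ) + 1)⁻¹ • b i) - w z.1 z.2))
      (fun n => ((hsh (((n : ℝ) + 1)⁻¹ • b i)).sub hm).const_smul ((n : ℝ) + 1)) (ae_of_all _ fun z => ?_)
    have h1 : inner ℝ (b i) (gradient (w z.1) z.2) = fderiv ℝ (w z.1) z.2 (b i) := by
      rw [real_inner_comm, gradient, InnerProductSpace.toDual_symm_apply]
    rw [h1]
    have h2 := (hd z.1 z.2).hasFDerivAt
    have hn : Tendsto (fun n : ℕ => (n : ℝ) + 1) atTop atTop :=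
      tendsto_atTop_add_const_right _ _ tendsto_natCast_atTop_atTop
    exact h2.lim (b i) (c := fun n : ℕ => (n : ℝ) + 1) (tendsto_norm_atTop_atTop.comp hn)
  have : (fun z : EuclideanSpace ℝ (Fin m) × EuclideanSpace ℝ (Fin d) =>
      gradient (w z.1) z.2) = fun z => ∑ i, inner ℝ (b i) (gradient (w z.1) z.2) • b i := by
    funext z
    exact (b.sum_repr' _).symm
  rw [this]
  exact Finset.aestronglyMeasurable_fun_sum _ fun i _ => (hco i).smul_const _

/-- **Bias–variance style decomposition for denoising score matching.**
With `(Y0, Y)` distributed with joint density `p0(y0) q(y|y0)` (expectations written as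
integrals of the joint density against the product Lebesgue measure), for every
measurable `ψ` with `E‖ψ(Y)‖² < ∞`, and assuming `E‖∇_y log q(Y|Y0)‖² < ∞` and the
validity of differentiation under the integral sign (so that
`∇ log p(y) = E[∇_y log q(Y|Y0) | Y = y]`), one has
`E‖∇_y log q(Y|Y0) − ψ(Y)‖² = E‖∇ log p(Y) − ψ(Y)‖² + C`
where `C = E‖∇_y log q(Y|Y0)‖² − E‖∇ log p(Y)‖²` does not depend on `ψ`. -/
theorem dsm_objective_decomposition {m d : ℕ}
    (p0 : EuclideanSpace ℝ (Fin m) → ℝ)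
    (q : EuclideanSpace ℝ (Fin d) → EuclideanSpace ℝ (Fin m) → ℝ)
    (hp0_nonneg : ∀ y0, 0 ≤ p0 y0)
    (hp0_int : Integrable p0)
    (hp0_prob : ∫ y0, p0 y0 = 1)
    (hq_pos : ∀ y y0, 0 < q y y0)
    (hq_prob : ∀ y0, ∫ y, q y y0 = 1)
    (hq_diff : ∀ y0, Differentiable ℝ (fun y => q y y0))
    (p : EuclideanSpace ℝ (Fin d) → ℝ)
    (hp : p = mixtureDensity p0 q)
    (hfin : ∀ y, Integrable (fun y0 => p0 y0 * q y y0))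
    -- validity of differentiation under the integral sign:
    -- `∇ log p(y)` equals the posterior average `E[∇_y log q(Y|Y0) | Y = y]`
    (hswap : ∀ y, gradient (fun z => Real.log (p z)) y
      = (p y)⁻¹ • ∫ y0, (p0 y0 * q y y0) • gradient (fun z => Real.log (q z y0)) y)
    -- `E‖∇_y log q(Y|Y0)‖² < ∞`
    (hsq : Integrable (fun z : EuclideanSpace ℝ (Fin m) × EuclideanSpace ℝ (Fin d) =>
      p0 z.1 * q z.2 z.1 * ‖gradient (fun y => Real.log (q y z.1)) z.2‖ ^ 2))
    (ψ : EuclideanSpace ℝ (Fin d) → EuclideanSpace ℝ (Fin d))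
    (hψ_meas : Measurable ψ)
    -- `E‖ψ(Y)‖² < ∞`
    (hψ_sq : Integrable (fun z : EuclideanSpace ℝ (Fin m) × EuclideanSpace ℝ (Fin d) =>
      p0 z.1 * q z.2 z.1 * ‖ψ z.2‖ ^ 2)) :
    (∫ z : EuclideanSpace ℝ (Fin m) × EuclideanSpace ℝ (Fin d),
        p0 z.1 * q z.2 z.1 *
          ‖gradient (fun y => Real.log (q y z.1)) z.2 - ψ z.2‖ ^ 2)
      = (∫ z : EuclideanSpace ℝ (Fin m) × EuclideanSpace ℝ (Fin d),
          p0 z.1 * q z.2 z.1 *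
            ‖gradient (fun y => Real.log (p y)) z.2 - ψ z.2‖ ^ 2)
        + ((∫ z : EuclideanSpace ℝ (Fin m) × EuclideanSpace ℝ (Fin d),
            p0 z.1 * q z.2 z.1 *
              ‖gradient (fun y => Real.log (q y z.1)) z.2‖ ^ 2)
          - (∫ z : EuclideanSpace ℝ (Fin m) × EuclideanSpace ℝ (Fin d),
            p0 z.1 * q z.2 z.1 *
              ‖gradient (fun y => Real.log (p y)) z.2‖ ^ 2)) := by
  subst hp
  have hqi : ∀ y0, Integrable (fun y => q y y0) := fun y0 => by
    by_contra h
    have := hq_prob y0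
    rw [integral_undef h] at this
    exact zero_ne_one this
  have hd : ∀ x, Differentiable ℝ (fun y => p0 x * q y x) := fun x => (hq_diff x).const_mul _
  have hwm : AEStronglyMeasurable
      (fun z : EuclideanSpace ℝ (Fin m) × EuclideanSpace ℝ (Fin d) => p0 z.1 * q z.2 z.1) :=
    aux_meas volume volume (fun x y => p0 x * q y x) (fun x => (hd x).continuous)
      (fun y => (hfin y).1)
  have hw0 : ∀ z : EuclideanSpace ℝ (Fin m) × EuclideanSpace ℝ (Fin d),
      0 ≤ p0 z.1 * q z.2 z.1 := fun z => mul_nonneg (hp0_nonneg _) (hq_pos _ _).le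
  have hw : Integrable
      (fun z : EuclideanSpace ℝ (Fin m) × EuclideanSpace ℝ (Fin d) => p0 z.1 * q z.2 z.1) := by
    rw [Measure.volume_eq_prod] at hwm ⊢
    rw [integrable_prod_iff hwm]
    refine ⟨ae_of_all _ fun x => (hqi x).const_mul (p0 x), ?_⟩
    refine hp0_int.congr (ae_of_all _ fun x => ?_)
    have : ∀ y, ‖p0 x * q y x‖ = p0 x * q y x := fun y => Real.norm_of_nonneg (hw0 (x, y))
    simp only [this, integral_const_mul, hq_prob, mul_one]
  have hgr : ∀ x y, gradient (fun y => p0 x * q y x) y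
      = (p0 x * q y x) • gradient (fun y => Real.log (q y x)) y := by
    intro x y
    have hq := (hq_diff x y).hasFDerivAt
    have h1 := (hq.const_mul (p0 x)).fderiv
    have h2 := (hq.log (hq_pos y x).ne').fderiv
    rw [gradient, gradient, h1, h2, map_smul, map_smul, smul_smul, mul_assoc,
      mul_inv_cancel₀ (hq_pos y x).ne', mul_one]
  have hppos : ∀ y, 0 < ∫ x, p0 x * q y x := by
    intro y
    have hs0 : 0 < ∫ x, p0 x := by rw [hp0_prob]; exact one_pos
    rw [integral_pos_iff_support_of_nonneg hp0_nonneg hp0_int] at hs0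
    rw [integral_pos_iff_support_of_nonneg (fun x => hw0 (x, y)) (hfin y)]
    convert hs0 using 2
    ext x
    simp [(hq_pos y x).ne']
  refine aux_core volume volume
    (fun z : EuclideanSpace ℝ (Fin m) × EuclideanSpace ℝ (Fin d) => p0 z.1 * q z.2 z.1)
    (fun z => gradient (fun y => Real.log (q y z.1)) z.2)
    (gradient (fun y => Real.log (mixtureDensity p0 q y))) ψ hw0 hw ?_ hsq ?_ hψ_meas hψ_sq ?_
  · have := aux_grad (fun x y => p0 x * q y x) hd hwm
    simp only [hgr] at this
    exact this
  · exact (InnerProductSpace.toDual ℝ _).symm.continuous.measurable.comp (measurable_fderiv ℝ _)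
  · intro y
    rw [hswap y, mixtureDensity, smul_smul, mul_inv_cancel₀ (hppos y).ne', one_smul]
end

section
/- Let E, Ẽ, F be standard Borel spaces, X ∼ μ on E, X̃ generated from X by a Markov kernel R : E → Ẽ, and X_t generated from X by a Markov kernel P : E → F, with X_t ⊥ X̃ | X. Let P̄ : Ẽ → F be the posterior-predictive kernel P̄(x̃) = ∫ P(x) dπ(x|x̃) where π(·|x̃) is the regular conditional law of X given X̃ = x̃. Define the conditional mutual information I(X_t; X | X̃) = E_{X̃}[ KL( Law(X_t, X | X̃) ‖ Law(X_t | X̃) ⊗ Law(X | X̃) ) ]. Then E[KL(P(X) ‖ P̄(X̃))] = I(X_t; X | X̃); i.e., the irreducible excess conditional KL risk incurred by conditioning on the corrupted observation X̃ instead of the clean state X equals the conditional mutual information between X_t and X given X̃. -/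
open MeasureTheory ProbabilityTheory
open scoped ENNReal

open Classical in
/-- Kullback–Leibler divergence `KL(ν ‖ ρ) ∈ [0, ∞]`: equal to `∫ log (dν/dρ) dν` when
`ν ≪ ρ` and this integral exists, and `+∞` otherwise. -/
noncomputable def klDiv {α : Type*} [MeasurableSpace α] (ν ρ : Measure α) : ℝ≥0∞ :=
  if ν ≪ ρ ∧ Integrable (llr ν ρ) ν
  then ENNReal.ofReal (∫ x, llr ν ρ x ∂ν)
  else ⊤

open InformationTheory in
lemma klDiv_eq_mathlib {α : Type*} [MeasurableSpace α] (ν ρ : Measure α)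
    [IsProbabilityMeasure ν] [IsProbabilityMeasure ρ] :
    _root_.klDiv ν ρ = InformationTheory.klDiv ν ρ := by
  rw [InformationTheory.klDiv_def, _root_.klDiv]
  simp

lemma aux_measurableSet_ac {Z F : Type*} [MeasurableSpace Z] [MeasurableSpace F]
    [StandardBorelSpace F] (κ η : Kernel Z F) [IsMarkovKernel κ] [IsMarkovKernel η] :
    MeasurableSet {a | κ a ≪ η a} := by
  have : {a | κ a ≪ η a} = {a | Kernel.singularPart κ η a Set.univ = 0} := by
    ext a
    simp only [Set.mem_setOf_eq, Kernel.singularPart_eq_singularPart_measure,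
      Measure.measure_univ_eq_zero, Measure.singularPart_eq_zero]
  rw [this]
  exact Kernel.measurable_coe _ MeasurableSet.univ (measurableSet_singleton 0)

lemma aux_klDiv_eq {Z F : Type*} [MeasurableSpace Z] [MeasurableSpace F]
    [StandardBorelSpace F] (κ η : Kernel Z F) [IsMarkovKernel κ] [IsMarkovKernel η] (a : Z)
    (h : κ a ≪ η a) :
    InformationTheory.klDiv (κ a) (η a) =
      ∫⁻ x, ENNReal.ofReal (InformationTheory.klFun (Kernel.rnDeriv κ η a x).toReal) ∂(η a) := by
  rw [InformationTheory.klDiv_eq_lintegral_klFun_of_ac h]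
  refine lintegral_congr_ae ?_
  filter_upwards [Kernel.rnDeriv_eq_rnDeriv_measure (κ := κ) (η := η) (a := a)] with x hx
  rw [hx]

lemma aux_measurable_fun {Z F : Type*} [MeasurableSpace Z] [MeasurableSpace F]
    [StandardBorelSpace F] (κ η : Kernel Z F) :
    Measurable (fun p : Z × F ↦
      ENNReal.ofReal (InformationTheory.klFun (Kernel.rnDeriv κ η p.1 p.2).toReal)) :=
  (InformationTheory.measurable_klFun.comp
    (Kernel.measurable_rnDeriv κ η).ennreal_toReal).ennreal_ofReal

open Classical in
lemma aux_measurable_klDiv {Z F : Type*} [MeasurableSpace Z] [MeasurableSpace F]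
    [StandardBorelSpace F] (κ η : Kernel Z F) [IsMarkovKernel κ] [IsMarkovKernel η] :
    Measurable (fun a ↦ InformationTheory.klDiv (κ a) (η a)) := by
  have : (fun a ↦ InformationTheory.klDiv (κ a) (η a)) = fun a ↦ if κ a ≪ η a then
      ∫⁻ x, ENNReal.ofReal (InformationTheory.klFun (Kernel.rnDeriv κ η a x).toReal) ∂(η a)
      else ∞ := by
    ext a
    split_ifs with h
    · exact aux_klDiv_eq κ η a h
    · exact InformationTheory.klDiv_of_not_ac h
  rw [this]
  exact Measurable.ite (aux_measurableSet_ac κ η)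
    (aux_measurable_fun κ η).lintegral_kernel_prod_right' measurable_const

lemma aux_compProd {Z F : Type*} [MeasurableSpace Z] [MeasurableSpace F]
    [StandardBorelSpace F] (m : Measure Z) [IsProbabilityMeasure m]
    (κ η : Kernel Z F) [IsMarkovKernel κ] [IsMarkovKernel η] :
    InformationTheory.klDiv (m ⊗ₘ κ) (m ⊗ₘ η)
      = ∫⁻ a, InformationTheory.klDiv (κ a) (η a) ∂m := by
  by_cases hac : m ⊗ₘ κ ≪ m ⊗ₘ η
  · have hae := Measure.absolutelyContinuous_compProd_right_iff.mp hac
    rw [InformationTheory.klDiv_eq_lintegral_klFun_of_ac hac]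
    have hk : κ =ᵐ[m] η.withDensity (Kernel.rnDeriv κ η) := by
      filter_upwards [hae] with a ha
      rw [Kernel.withDensity_apply _ (Kernel.measurable_rnDeriv κ η),
        withDensity_congr_ae (Kernel.rnDeriv_eq_rnDeriv_measure (κ := κ) (η := η) (a := a)),
        Measure.withDensity_rnDeriv_eq _ _ ha]
    have hm : m ⊗ₘ κ = (m ⊗ₘ η).withDensity (fun p ↦ Kernel.rnDeriv κ η p.1 p.2) := by
      rw [Measure.compProd_congr hk]
      exact Measure.compProd_withDensity (Kernel.measurable_rnDeriv κ η)
    have hr := Measure.rnDeriv_withDensity (m ⊗ₘ η) (Kernel.measurable_rnDeriv κ η)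
    rw [← hm] at hr
    have h1 : ∫⁻ x, ENNReal.ofReal (InformationTheory.klFun
        ((m ⊗ₘ κ).rnDeriv (m ⊗ₘ η) x).toReal) ∂(m ⊗ₘ η) = ∫⁻ p, ENNReal.ofReal
        (InformationTheory.klFun (Kernel.rnDeriv κ η p.1 p.2).toReal) ∂(m ⊗ₘ η) := by
      refine lintegral_congr_ae ?_
      filter_upwards [hr] with x hx
      rw [hx]
    rw [h1, Measure.lintegral_compProd (aux_measurable_fun κ η)]
    refine lintegral_congr_ae ?_
    filter_upwards [hae] with a ha
    exact (aux_klDiv_eq κ η a ha).symm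
  · rw [InformationTheory.klDiv_of_not_ac hac]
    by_contra hne
    apply hac
    rw [Measure.absolutelyContinuous_compProd_right_iff]
    filter_upwards [ae_lt_top (aux_measurable_klDiv κ η) (Ne.symm hne)] with a ha
    by_contra h
    rw [InformationTheory.klDiv_of_not_ac h] at ha
    exact lt_irrefl _ ha

lemma aux_swap {α β : Type*} [MeasurableSpace α] [MeasurableSpace β] (μ ν : Measure (α × β))
    [IsFiniteMeasure μ] [IsFiniteMeasure ν] :
    InformationTheory.klDiv (μ.map Prod.swap) (ν.map Prod.swap)
      = InformationTheory.klDiv μ ν := by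
  refine le_antisymm (InformationTheory.klDiv_map_le μ ν measurable_swap) ?_
  have h := InformationTheory.klDiv_map_le (μ.map Prod.swap) (ν.map Prod.swap)
    (measurable_swap : Measurable (Prod.swap : β × α → α × β))
  rwa [Measure.map_map measurable_swap measurable_swap,
    Measure.map_map measurable_swap measurable_swap, Prod.swap_swap_eq, Measure.map_id,
    Measure.map_id] at h

/-- **The conditioning gap equals a conditional mutual information (identity (C.8)).**
`X ∼ μ` on `E`, `X̃` is generated from `X` by the Markov kernel `R : E → Ẽ` (joint law
`μ ⊗ₘ R`), and `X_t` is generated from `X` by the Markov kernel `P : E → F`,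
conditionally independently of `X̃` given `X`. Let `π` be a regular conditional
distribution of `X` given `X̃`, and `P̄ = P ∘ₖ π` the posterior-predictive kernel.
By conditional independence, the conditional joint law of `(X_t, X)` given `X̃ = x̃` is
`((π x̃) ⊗ₘ P).map Prod.swap`, its conditional marginals are `P̄ x̃` and `π x̃`, and the
conditional mutual information is
`I(X_t; X | X̃) = E_{X̃}[ KL( Law(X_t, X | X̃) ‖ Law(X_t | X̃) ⊗ Law(X | X̃) ) ]`.
Then the irreducible excess conditional KL risk incurred by conditioning on the
corrupted observation `X̃` instead of the clean state `X` equals this conditional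
mutual information: `E[KL(P(X) ‖ P̄(X̃))] = I(X_t; X | X̃)`. -/
theorem conditioning_gap_eq_conditional_mutual_information
    {E E' F : Type*} [MeasurableSpace E] [StandardBorelSpace E]
    [MeasurableSpace E'] [StandardBorelSpace E']
    [MeasurableSpace F] [StandardBorelSpace F]
    (μ : Measure E) [IsProbabilityMeasure μ]
    (R : Kernel E E') [IsMarkovKernel R]
    (P : Kernel E F) [IsMarkovKernel P]
    (π : Kernel E' E) [IsMarkovKernel π]
    -- `π` is a regular conditional distribution of `X` given `X̃`
    (hπ : (μ ⊗ₘ R).map Prod.swap = ((μ ⊗ₘ R).snd) ⊗ₘ π) :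
    ∫⁻ z, klDiv (P z.1) ((P ∘ₖ π) z.2) ∂(μ ⊗ₘ R)
      = ∫⁻ x', klDiv (((π x') ⊗ₘ P).map Prod.swap)
          (((P ∘ₖ π) x').prod (π x')) ∂((μ ⊗ₘ R).snd) := by
  have hmeas : Measurable (fun z : E' × E ↦
      InformationTheory.klDiv (P z.2) ((P ∘ₖ π) z.1)) :=
    aux_measurable_klDiv (P.comap (Prod.snd : E' × E → E) measurable_snd)
      ((P ∘ₖ π).comap (Prod.fst : E' × E → E') measurable_fst)
  simp_rw [klDiv_eq_mathlib]
  have h1 : ∫⁻ z, InformationTheory.klDiv (P z.1) ((P ∘ₖ π) z.2) ∂(μ ⊗ₘ R)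
      = ∫⁻ z, InformationTheory.klDiv (P z.2) ((P ∘ₖ π) z.1) ∂((μ ⊗ₘ R).map Prod.swap) := by
    rw [lintegral_map hmeas measurable_swap]
    rfl
  rw [h1, hπ, Measure.lintegral_compProd hmeas]
  refine lintegral_congr fun x' ↦ ?_
  have : IsProbabilityMeasure (((π x') ⊗ₘ P).map Prod.swap) :=
    Measure.isProbabilityMeasure_map measurable_swap.aemeasurable
  rw [klDiv_eq_mathlib, ← Measure.prod_swap, aux_swap, ← Measure.compProd_const, aux_compProd]
  rfl
end
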